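/- Let ω : A × B → k be a non-degenerate Hopf pairing between Hopf algebras over a field k, with inverse copairing Σ_i b_i ⊗ a_i, and assume the antipodes are bijective. For a left Yetter–Drinfel'd module (X, ρ, δ) over A, define Ω(X) to be X equipped with the left B-action b · x := ω(x_{(-1)}, S_B⁻²(b)) x_{(0)} and the left B-coaction δ_Ω(x) := Σ_i S_B²(b_i) ⊗ (a_i · x). Then: (1) Ω(X) is a left Yetter–Drinfel'd module over B; and (2) for left Yetter–Drinfel'd modules X and Y over A, the map Ω_2(X,Y) : Ω(X) ⊗ Ω(Y) → Ω(X ⊗ Y), x ⊗ y ↦ (y_{(-1)} · x) ⊗ y_{(0)} (using the A-structures), is a B-linear, B-colinear bijection. -/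

import Mathlib

open TensorProduct

noncomputable section

variable {k : Type*} [Field k]
variable {A : Type*} [Ring A] [HopfAlgebra k A]
variable {X Y Z : Type*} [AddCommGroup X] [Module k X] [AddCommGroup Y] [Module k Y]
  [AddCommGroup Z] [Module k Z]

/-- LHS of the left Yetter–Drinfel'd compatibility condition, as a linear map
`A ⊗ X → A ⊗ X` sending `h ⊗ x` to `h₍₁₎x₍₋₁₎ ⊗ h₍₂₎ · x₍₀₎`. -/
def ydL (act : A ⊗[k] X →ₗ[k] X) (coact : X →ₗ[k] A ⊗[k] X) :
    A ⊗[k] X →ₗ[k] A ⊗[k] X :=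
  TensorProduct.map (LinearMap.mul' k A) act
    ∘ₗ (TensorProduct.tensorTensorTensorComm k A A A X).toLinearMap
    ∘ₗ TensorProduct.map (Coalgebra.comul (R := k)) coact

/-- RHS of the left Yetter–Drinfel'd compatibility condition, sending `h ⊗ x` to
`(h₍₁₎·x)₍₋₁₎ h₍₂₎ ⊗ (h₍₁₎·x)₍₀₎`. -/
def ydR (act : A ⊗[k] X →ₗ[k] X) (coact : X →ₗ[k] A ⊗[k] X) :
    A ⊗[k] X →ₗ[k] A ⊗[k] X :=
  TensorProduct.map (LinearMap.mul' k A) LinearMap.id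
    ∘ₗ (TensorProduct.assoc k A A X).symm.toLinearMap
    ∘ₗ LinearMap.lTensor A (TensorProduct.comm k X A).toLinearMap
    ∘ₗ (TensorProduct.assoc k A X A).toLinearMap
    ∘ₗ LinearMap.rTensor A coact
    ∘ₗ LinearMap.rTensor A act
    ∘ₗ (TensorProduct.assoc k A X A).symm.toLinearMap
    ∘ₗ LinearMap.lTensor A (TensorProduct.comm k A X).toLinearMap
    ∘ₗ (TensorProduct.assoc k A A X).toLinearMap
    ∘ₗ LinearMap.rTensor X (Coalgebra.comul (R := k))

/-- A left Yetter–Drinfel'd module structure over the Hopf algebra `A` on the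
vector space `X`: a left action, a left coaction, and the compatibility. -/
structure IsYD (act : A ⊗[k] X →ₗ[k] X) (coact : X →ₗ[k] A ⊗[k] X) : Prop where
  act_one : ∀ x : X, act (1 ⊗ₜ[k] x) = x
  act_mul : ∀ (a a' : A) (x : X),
    act ((a * a') ⊗ₜ[k] x) = act (a ⊗ₜ[k] act (a' ⊗ₜ[k] x))
  coassoc : (TensorProduct.assoc k A A X).toLinearMap
      ∘ₗ LinearMap.rTensor X (Coalgebra.comul (R := k)) ∘ₗ coact
      = LinearMap.lTensor A coact ∘ₗ coact
  counit_coact : (TensorProduct.lid k X).toLinearMap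
      ∘ₗ LinearMap.rTensor X (Coalgebra.counit (R := k)) ∘ₗ coact = LinearMap.id
  yd : ydL act coact = ydR act coact

/-- The diagonal action `h · (x ⊗ y) = h₍₁₎·x ⊗ h₍₂₎·y` on a tensor product. -/
def tAct (actX : A ⊗[k] X →ₗ[k] X) (actY : A ⊗[k] Y →ₗ[k] Y) :
    A ⊗[k] (X ⊗[k] Y) →ₗ[k] X ⊗[k] Y :=
  TensorProduct.map actX actY
    ∘ₗ (TensorProduct.tensorTensorTensorComm k A A X Y).toLinearMap
    ∘ₗ LinearMap.rTensor (X ⊗[k] Y) (Coalgebra.comul (R := k))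

/-- The codiagonal coaction `x ⊗ y ↦ x₍₋₁₎y₍₋₁₎ ⊗ (x₍₀₎ ⊗ y₍₀₎)` on a tensor product. -/
def tCoact (coactX : X →ₗ[k] A ⊗[k] X) (coactY : Y →ₗ[k] A ⊗[k] Y) :
    X ⊗[k] Y →ₗ[k] A ⊗[k] (X ⊗[k] Y) :=
  LinearMap.rTensor (X ⊗[k] Y) (LinearMap.mul' k A)
    ∘ₗ (TensorProduct.tensorTensorTensorComm k A X A Y).toLinearMap
    ∘ₗ TensorProduct.map coactX coactY

/-- The Yetter–Drinfel'd braiding `c_{X,Y} : x ⊗ y ↦ x₍₋₁₎ · y ⊗ x₍₀₎`. -/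
def ydBraid (coactX : X →ₗ[k] A ⊗[k] X) (actY : A ⊗[k] Y →ₗ[k] Y) :
    X ⊗[k] Y →ₗ[k] Y ⊗[k] X :=
  LinearMap.rTensor X actY
    ∘ₗ (TensorProduct.assoc k A Y X).symm.toLinearMap
    ∘ₗ LinearMap.lTensor A (TensorProduct.comm k X Y).toLinearMap
    ∘ₗ (TensorProduct.assoc k A X Y).toLinearMap
    ∘ₗ LinearMap.rTensor Y coactX

/-- The map `θ_X : x ↦ S(x₍₋₁₎) · x₍₀₎`. -/
def ydTheta (act : A ⊗[k] X →ₗ[k] X) (coact : X →ₗ[k] A ⊗[k] X) : X →ₗ[k] X :=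
  act ∘ₗ LinearMap.rTensor X (HopfAlgebra.antipode (R := k)) ∘ₗ coact

section Pairing

variable {B : Type*} [Ring B] [HopfAlgebra k B]

/-- A Hopf pairing between the Hopf algebras `A` and `B` over the field `k`. -/
structure IsHopfPairing (ω : A →ₗ[k] B →ₗ[k] k) : Prop where
  mul_left : ∀ (a a' : A) (b : B),
    ω (a * a') b =
      (LinearMap.mul' k k ∘ₗ TensorProduct.map (ω a') (ω a)) (Coalgebra.comul (R := k) b)
  one_left : ∀ b : B, ω 1 b = Coalgebra.counit (R := k) b
  mul_right : ∀ (a : A) (b b' : B),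
    ω a (b * b') =
      (LinearMap.mul' k k ∘ₗ TensorProduct.map (ω.flip b') (ω.flip b)) (Coalgebra.comul (R := k) a)
  one_right : ∀ a : A, ω a 1 = Coalgebra.counit (R := k) a

/-- Non-degeneracy of a pairing, witnessed by an inverse copairing `Σᵢ bᵢ ⊗ aᵢ`. -/
def IsInverseCopairing (ω : A →ₗ[k] B →ₗ[k] k) {n : ℕ} (b : Fin n → B) (a : Fin n → A) :
    Prop :=
  (∀ x : A, ∑ i, ω x (b i) • a i = x) ∧ (∀ y : B, ∑ i, ω (a i) y • b i = y)

/-- The left `B`-action `b · x := ω(x₍₋₁₎, S_B⁻²(b)) x₍₀₎` of the functor `Ω`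
(with `SB'` a linear inverse of the antipode of `B`). -/
def omegaAct (ω : A →ₗ[k] B →ₗ[k] k) (SB' : B →ₗ[k] B) (coact : X →ₗ[k] A ⊗[k] X) :
    B ⊗[k] X →ₗ[k] X :=
  (TensorProduct.lid k X).toLinearMap
    ∘ₗ LinearMap.rTensor X (TensorProduct.lift ω)
    ∘ₗ LinearMap.rTensor X (TensorProduct.comm k B A).toLinearMap
    ∘ₗ (TensorProduct.assoc k B A X).symm.toLinearMap
    ∘ₗ LinearMap.lTensor B coact
    ∘ₗ LinearMap.rTensor X (SB' ∘ₗ SB')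

/-- The left `B`-coaction `x ↦ Σᵢ S_B²(bᵢ) ⊗ (aᵢ · x)` of the functor `Ω`. -/
def omegaCoact {n : ℕ} (b : Fin n → B) (a : Fin n → A) (act : A ⊗[k] X →ₗ[k] X) :
    X →ₗ[k] B ⊗[k] X :=
  ∑ i, (TensorProduct.mk k B X
      (HopfAlgebra.antipode (R := k) (HopfAlgebra.antipode (R := k) (b i))))
    ∘ₗ act ∘ₗ TensorProduct.mk k A X (a i)

/-- The monoidal structure `Ω₂ : x ⊗ y ↦ (y₍₋₁₎ · x) ⊗ y₍₀₎` of the functor `Ω`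
(expressed through the `A`-structures). -/
def omega2 (actX : A ⊗[k] X →ₗ[k] X) (coactY : Y →ₗ[k] A ⊗[k] Y) :
    X ⊗[k] Y →ₗ[k] X ⊗[k] Y :=
  LinearMap.rTensor Y actX
    ∘ₗ LinearMap.rTensor Y (TensorProduct.comm k X A).toLinearMap
    ∘ₗ (TensorProduct.assoc k X A Y).symm.toLinearMap
    ∘ₗ LinearMap.lTensor X coactY

section Helpers

variable {M N P : Type*} [AddCommGroup M] [Module k M] [AddCommGroup N] [Module k N]
  [AddCommGroup P] [Module k P]

/-- Contraction of the first tensor factor with a functional. -/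
def ctr (f : M →ₗ[k] k) : M ⊗[k] N →ₗ[k] N :=
  (TensorProduct.lid k N).toLinearMap ∘ₗ LinearMap.rTensor N f

lemma ctr_tmul (f : M →ₗ[k] k) (m : M) (x : N) : ctr f (m ⊗ₜ[k] x) = f m • x := by
  simp [ctr]

lemma ctr_lTensor (f : M →ₗ[k] k) (g : N →ₗ[k] P) (t : M ⊗[k] N) :
    ctr f (LinearMap.lTensor M g t) = g (ctr f t) := by
  induction t with
  | zero => simp
  | tmul m x => simp [ctr_tmul]
  | add s t hs ht => simp only [map_add, hs, ht]

lemma ctr_ext {ω : A →ₗ[k] B →ₗ[k] k} {n : ℕ} {b : Fin n → B} {a : Fin n → A}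
    (hcop : IsInverseCopairing ω b a) {z z' : B ⊗[k] N}
    (h : ∀ c, ctr (ω c) z = ctr (ω c) z') : z = z' := by
  have key : ∀ z : B ⊗[k] N, z = ∑ i, b i ⊗ₜ[k] ctr (ω (a i)) z := by
    intro z
    induction z with
    | zero => simp
    | tmul y x =>
      simp only [ctr_tmul, ← TensorProduct.smul_tmul, ← TensorProduct.sum_tmul, hcop.2 y]
    | add s t hs ht =>
      simp only [map_add, TensorProduct.tmul_add, Finset.sum_add_distrib]
      rw [← hs, ← ht]
  rw [key z, key z']
  simp only [h]

lemma ext_right {ω : A →ₗ[k] B →ₗ[k] k} {n : ℕ} {b : Fin n → B} {a : Fin n → A}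
    (hcop : IsInverseCopairing ω b a) {y y' : B} (h : ∀ c, ω c y = ω c y') : y = y' := by
  rw [← hcop.2 y, ← hcop.2 y']
  simp only [h]

/-- A Sweedler-type representation of a coproduct indexed by a finite type. -/
lemma exists_repr {H : Type*} [Ring H] [HopfAlgebra k H] (h : H) :
    ∃ (s : Finset (H × H)) (l r : H × H → H),
      Coalgebra.comul (R := k) h = ∑ i ∈ s, l i ⊗ₜ[k] r i :=
  ⟨_, _, _, (Coalgebra.Repr.arbitrary k h).eq.symm⟩

lemma pair_mul_left {ω : A →ₗ[k] B →ₗ[k] k} (hω : IsHopfPairing ω) {c : B} {ι : Type*}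
    {s : Finset ι} {l r : ι → B} (hc : Coalgebra.comul (R := k) c = ∑ i ∈ s, l i ⊗ₜ[k] r i)
    (x y : A) : ω (x * y) c = ∑ i ∈ s, ω x (r i) * ω y (l i) := by
  rw [hω.mul_left, hc]
  simp [mul_comm]

lemma pair_mul_right {ω : A →ₗ[k] B →ₗ[k] k} (hω : IsHopfPairing ω) {h : A} {ι : Type*}
    {s : Finset ι} {l r : ι → A} (hh : Coalgebra.comul (R := k) h = ∑ i ∈ s, l i ⊗ₜ[k] r i)
    (x y : B) : ω h (x * y) = ∑ i ∈ s, ω (l i) y * ω (r i) x := by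
  rw [hω.mul_right, hh]
  simp

lemma ydL_tmul (act : A ⊗[k] X →ₗ[k] X) (coact : X →ₗ[k] A ⊗[k] X) {h : A} {ι : Type*}
    {s : Finset ι} {l r : ι → A} (hh : Coalgebra.comul (R := k) h = ∑ i ∈ s, l i ⊗ₜ[k] r i)
    (x : X) : ydL act coact (h ⊗ₜ[k] x) =
      ∑ i ∈ s, TensorProduct.map (LinearMap.mulLeft k (l i))
        (act ∘ₗ TensorProduct.mk k A X (r i)) (coact x) := by
  simp only [ydL, LinearMap.comp_apply, TensorProduct.map_tmul, hh]
  induction coact x with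
  | zero => simp
  | tmul m x => simp [TensorProduct.sum_tmul]
  | add s t hs ht =>
    simp only [map_add, TensorProduct.tmul_add, hs, ht, Finset.sum_add_distrib]

lemma ydR_tmul (act : A ⊗[k] X →ₗ[k] X) (coact : X →ₗ[k] A ⊗[k] X) {h : A} {ι : Type*}
    {s : Finset ι} {l r : ι → A} (hh : Coalgebra.comul (R := k) h = ∑ i ∈ s, l i ⊗ₜ[k] r i)
    (x : X) : ydR act coact (h ⊗ₜ[k] x) =
      ∑ i ∈ s, LinearMap.rTensor X (LinearMap.mulRight k (r i))
        (coact (act (l i ⊗ₜ[k] x))) := by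
  simp only [ydR, LinearMap.comp_apply, LinearMap.rTensor_tmul, hh, TensorProduct.sum_tmul,
    map_sum]
  refine Finset.sum_congr rfl fun i _ => ?_
  simp only [LinearEquiv.coe_coe, TensorProduct.assoc_tmul, LinearMap.lTensor_tmul,
    TensorProduct.comm_tmul, TensorProduct.assoc_symm_tmul, LinearMap.rTensor_tmul]
  induction coact (act (l i ⊗ₜ[k] x)) with
  | zero => simp
  | tmul m x => simp
  | add s t hs ht => simp only [map_add, TensorProduct.add_tmul, hs, ht]

/-- `ω(a, -)` contracted against `map (c * -) g`. -/
lemma ctr_mulLeft_right {ω : A →ₗ[k] B →ₗ[k] k} (hω : IsHopfPairing ω) {h : A} {ι : Type*}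
    {s : Finset ι} {l r : ι → A} (hh : Coalgebra.comul (R := k) h = ∑ i ∈ s, l i ⊗ₜ[k] r i)
    (c : B) (g : M →ₗ[k] N) (t : B ⊗[k] M) :
    ctr (ω h) (TensorProduct.map (LinearMap.mulLeft k c) g t) =
      ∑ i ∈ s, ω (r i) c • g (ctr (ω (l i)) t) := by
  induction t with
  | zero => simp
  | tmul m x =>
    simp [ctr_tmul, pair_mul_right hω hh, Finset.sum_smul, smul_smul, mul_comm]
  | add s t hs ht => simp only [map_add, hs, ht, smul_add, Finset.sum_add_distrib]

lemma ctr_mulRight_right {ω : A →ₗ[k] B →ₗ[k] k} (hω : IsHopfPairing ω) {h : A} {ι : Type*}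
    {s : Finset ι} {l r : ι → A} (hh : Coalgebra.comul (R := k) h = ∑ i ∈ s, l i ⊗ₜ[k] r i)
    (c : B) (t : B ⊗[k] M) :
    ctr (ω h) (LinearMap.rTensor M (LinearMap.mulRight k c) t) =
      ∑ i ∈ s, ω (l i) c • (ctr (ω (r i)) t) := by
  induction t with
  | zero => simp
  | tmul m x =>
    simp [ctr_tmul, pair_mul_right hω hh, Finset.sum_smul, mul_smul]
  | add s t hs ht => simp only [map_add, hs, ht, smul_add, Finset.sum_add_distrib]

lemma ctr_mulLeft_left {ω : A →ₗ[k] B →ₗ[k] k} (hω : IsHopfPairing ω) {c : B} {ι : Type*}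
    {s : Finset ι} {l r : ι → B} (hc : Coalgebra.comul (R := k) c = ∑ i ∈ s, l i ⊗ₜ[k] r i)
    (h : A) (g : M →ₗ[k] N) (t : A ⊗[k] M) :
    ctr (ω.flip c) (TensorProduct.map (LinearMap.mulLeft k h) g t) =
      ∑ i ∈ s, ω h (r i) • g (ctr (ω.flip (l i)) t) := by
  induction t with
  | zero => simp
  | tmul m x =>
    simp [ctr_tmul, pair_mul_left hω hc, Finset.sum_smul, mul_smul]
  | add s t hs ht => simp only [map_add, hs, ht, smul_add, Finset.sum_add_distrib]

lemma ctr_mulRight_left {ω : A →ₗ[k] B →ₗ[k] k} (hω : IsHopfPairing ω) {c : B} {ι : Type*}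
    {s : Finset ι} {l r : ι → B} (hc : Coalgebra.comul (R := k) c = ∑ i ∈ s, l i ⊗ₜ[k] r i)
    (h : A) (t : A ⊗[k] M) :
    ctr (ω.flip c) (LinearMap.rTensor M (LinearMap.mulRight k h) t) =
      ∑ i ∈ s, ω h (l i) • (ctr (ω.flip (r i)) t) := by
  induction t with
  | zero => simp
  | tmul m x =>
    simp [ctr_tmul, pair_mul_left hω hc, Finset.sum_smul, smul_smul, mul_comm]
  | add s t hs ht => simp only [map_add, hs, ht, smul_add, Finset.sum_add_distrib]

lemma ctr_ctr_assoc_left {ω : A →ₗ[k] B →ₗ[k] k} (hω : IsHopfPairing ω) (x y : A)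
    (t : B ⊗[k] M) :
    ctr (ω y) (ctr (ω x) ((TensorProduct.assoc k B B M)
      (LinearMap.rTensor M (Coalgebra.comul (R := k)) t))) = ctr (ω (y * x)) t := by
  induction t with
  | zero => simp
  | tmul c m =>
    obtain ⟨s, l, r, hc⟩ := exists_repr (k := k) c
    simp [ctr_tmul, pair_mul_left hω hc, hc, TensorProduct.sum_tmul, Finset.sum_smul,
      smul_smul, mul_comm]
  | add s t hs ht => simp only [map_add, hs, ht]

lemma ctr_ctr_assoc_right {ω : A →ₗ[k] B →ₗ[k] k} (hω : IsHopfPairing ω) (x y : B)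
    (t : A ⊗[k] M) :
    ctr (ω.flip y) (ctr (ω.flip x) ((TensorProduct.assoc k A A M)
      (LinearMap.rTensor M (Coalgebra.comul (R := k)) t))) = ctr (ω.flip (y * x)) t := by
  induction t with
  | zero => simp
  | tmul c m =>
    obtain ⟨s, l, r, hc⟩ := exists_repr (k := k) c
    simp [ctr_tmul, pair_mul_right hω hc, hc, TensorProduct.sum_tmul, Finset.sum_smul, mul_smul]
  | add s t hs ht => simp only [map_add, hs, ht]

section Dual

variable {ω : A →ₗ[k] B →ₗ[k] k} (hω : IsHopfPairing ω)
    {n : ℕ} {b : Fin n → B} {a : Fin n → A} (hcop : IsInverseCopairing ω b a)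
    {actX : A ⊗[k] X →ₗ[k] X} {coactX : X →ₗ[k] A ⊗[k] X}
    {actY : A ⊗[k] Y →ₗ[k] Y} {coactY : Y →ₗ[k] A ⊗[k] Y}
    (hX : IsYD actX coactX) (hY : IsYD actY coactY)
    {actX' : B ⊗[k] X →ₗ[k] X} {coactX' : X →ₗ[k] B ⊗[k] X}
    {actY' : B ⊗[k] Y →ₗ[k] Y} {coactY' : Y →ₗ[k] B ⊗[k] Y}
    (haX : ∀ c x, actX' (c ⊗ₜ[k] x) = ctr (ω.flip c) (coactX x))
    (hcX : ∀ h x, ctr (ω h) (coactX' x) = actX (h ⊗ₜ[k] x))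
    (haY : ∀ c x, actY' (c ⊗ₜ[k] x) = ctr (ω.flip c) (coactY x))
    (hcY : ∀ h x, ctr (ω h) (coactY' x) = actY (h ⊗ₜ[k] x))

include hω haX in
lemma ctr_ydL (h : A) {c : B} {ι κ : Type*}
    {s : Finset ι} {l r : ι → B} (hc : Coalgebra.comul (R := k) c = ∑ i ∈ s, l i ⊗ₜ[k] r i)
    {s' : Finset κ} {l' r' : κ → A} (hh : Coalgebra.comul (R := k) h = ∑ i ∈ s', l' i ⊗ₜ[k] r' i)
    (x : X) : ctr (ω.flip c) (ydL actX coactX (h ⊗ₜ[k] x)) =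
      ∑ j ∈ s', ∑ i ∈ s, ω (l' j) (r i) • actX (r' j ⊗ₜ[k] actX' (l i ⊗ₜ[k] x)) := by
  simp only [ydL_tmul _ _ hh, map_sum, ctr_mulLeft_left hω hc, haX, LinearMap.comp_apply,
    TensorProduct.mk_apply]

include hω hcop hX haX hcX in
theorem dual_isYD : IsYD actX' coactX' where
  act_one x := by
    rw [haX]
    have h1 : ω.flip 1 = Coalgebra.counit (R := k) := by
      ext h; simp [hω.one_right]
    rw [h1]
    exact LinearMap.congr_fun hX.counit_coact x
  act_mul c c' x := by
    rw [haX, haX, haX, ← ctr_ctr_assoc_right hω]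
    have := LinearMap.congr_fun hX.coassoc x
    simp only [LinearMap.comp_apply, LinearEquiv.coe_coe] at this
    rw [this, ctr_lTensor]
  coassoc := by
    ext x
    refine ctr_ext hcop fun h => ctr_ext hcop fun h' => ?_
    simp only [LinearMap.comp_apply, LinearEquiv.coe_coe]
    rw [ctr_ctr_assoc_left hω, ctr_lTensor, hcX, hcX, hcX, hX.act_mul]
  counit_coact := by
    ext x
    have h1 : ω 1 = Coalgebra.counit (R := k) := by
      ext h; simp [hω.one_left]
    have := hcX 1 x
    rw [hX.act_one, h1] at this
    exact this
  yd := by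
    refine TensorProduct.ext' fun c x => ctr_ext hcop fun h => ?_
    obtain ⟨s, l, r, hc⟩ := exists_repr (k := k) c
    obtain ⟨s', l', r', hh⟩ := exists_repr (k := k) h
    trans ctr (ω.flip c) (ydR actX coactX (h ⊗ₜ[k] x))
    · simp only [ydL_tmul _ _ hc, ydR_tmul _ _ hh, map_sum, ctr_mulLeft_right hω hh,
        ctr_mulRight_left hω hc, hcX, LinearMap.comp_apply, TensorProduct.mk_apply, haX]
      exact Finset.sum_comm
    · rw [← hX.yd, ctr_ydL hω haX h hc hh]
      simp only [ydR_tmul _ _ hc, map_sum, ctr_mulRight_right hω hh, hcX]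
      exact Finset.sum_comm

/-- `h ⊗ y ↦ (g h · x) ⊗ y`. -/
def wmap (actX : A ⊗[k] X →ₗ[k] X) (g : A →ₗ[k] A) (x : X) : A ⊗[k] Y →ₗ[k] X ⊗[k] Y :=
  LinearMap.rTensor Y (actX ∘ₗ (TensorProduct.mk k A X).flip x ∘ₗ g)

lemma wmap_tmul (g : A →ₗ[k] A) (x : X) (h : A) (y : Y) :
    wmap actX g x (h ⊗ₜ[k] y) = actX (g h ⊗ₜ[k] x) ⊗ₜ[k] y := by
  simp [wmap]

lemma omega2_tmul (x : X) (y : Y) :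
    omega2 actX coactY (x ⊗ₜ[k] y) = wmap actX LinearMap.id x (coactY y) := by
  simp only [omega2, LinearMap.comp_apply, LinearMap.lTensor_tmul]
  induction coactY y with
  | zero => simp
  | tmul m x => simp [wmap_tmul]
  | add s t hs ht => simp only [map_add, TensorProduct.tmul_add, hs, ht]

/-- Twisted version of `omega2`. -/
def omegaT (actX : A ⊗[k] X →ₗ[k] X) (coactY : Y →ₗ[k] A ⊗[k] Y) (g : A →ₗ[k] A) :
    X ⊗[k] Y →ₗ[k] X ⊗[k] Y :=
  omega2 (actX ∘ₗ LinearMap.rTensor X g) coactY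

lemma omegaT_tmul (g : A →ₗ[k] A) (x : X) (y : Y) :
    omegaT actX coactY g (x ⊗ₜ[k] y) = wmap actX g x (coactY y) := by
  rw [omegaT, omega2_tmul]
  congr 1

include hX hY in
lemma omegaT_comp (g g' : A →ₗ[k] A)
    (hg : ∀ h : A, LinearMap.mul' k A (TensorProduct.map g g'
      (TensorProduct.comm k A A (Coalgebra.comul (R := k) h))) =
        algebraMap k A (Coalgebra.counit (R := k) h)) (z : X ⊗[k] Y) :
    omegaT actX coactY g (omegaT actX coactY g' z) = z := by
  induction z with
  | zero => simp
  | add s t hs ht => simp only [map_add, hs, ht]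
  | tmul x y =>
    rw [omegaT_tmul]
    -- the triple map `h ⊗ h' ⊗ y ↦ g h' · g' h · x ⊗ y`
    let Q : A ⊗[k] (A ⊗[k] Y) →ₗ[k] X ⊗[k] Y :=
      TensorProduct.lift
        { toFun := fun h => wmap actX g (actX (g' h ⊗ₜ[k] x))
          map_add' := by
            intro h h'
            refine TensorProduct.ext' fun u y => ?_
            simp [wmap_tmul, TensorProduct.tmul_add, TensorProduct.add_tmul]
          map_smul' := by
            intro c h
            refine TensorProduct.ext' fun u y => ?_
            simp [wmap_tmul, ← TensorProduct.smul_tmul'] }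
    have h1 : ∀ t : A ⊗[k] Y, omegaT actX coactY g (wmap actX g' x t) =
        Q (LinearMap.lTensor A coactY t) := by
      intro t
      induction t with
      | zero => simp
      | add s t hs ht => simp only [map_add, hs, ht]
      | tmul h y => simp [wmap_tmul, omegaT_tmul, Q]
    have h2 : ∀ t : A ⊗[k] Y, Q (TensorProduct.assoc k A A Y
        (LinearMap.rTensor Y (Coalgebra.comul (R := k)) t)) =
        x ⊗ₜ[k] ((TensorProduct.lid k Y) (LinearMap.rTensor Y (Coalgebra.counit (R := k)) t)) := by
      intro t
      induction t with
      | zero => simp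
      | add s t hs ht => simp only [map_add, hs, ht, TensorProduct.tmul_add]
      | tmul h y =>
        obtain ⟨s, l, r, hh⟩ := exists_repr (k := k) h
        have := hg h
        simp only [hh, map_sum, TensorProduct.comm_tmul, TensorProduct.map_tmul,
          LinearMap.mul'_apply] at this
        simp only [LinearMap.rTensor_tmul, hh, TensorProduct.sum_tmul, map_sum,
          TensorProduct.assoc_tmul, Q, TensorProduct.lift.tmul, LinearMap.coe_mk, AddHom.coe_mk,
          wmap_tmul, ← hX.act_mul]
        rw [← TensorProduct.sum_tmul, ← map_sum, ← TensorProduct.sum_tmul, this,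
          Algebra.algebraMap_eq_smul_one, ← TensorProduct.smul_tmul', map_smul, hX.act_one]
        simp [TensorProduct.smul_tmul]
    have h3 := LinearMap.congr_fun hY.coassoc y
    have h4 := LinearMap.congr_fun hY.counit_coact y
    simp only [LinearMap.comp_apply, LinearEquiv.coe_coe] at h3 h4
    rw [h1, ← h3, h2, h4]
    rfl

include hX hY in
theorem omega2_bijective (SA' : A →ₗ[k] A)
    (hSA : SA' ∘ₗ HopfAlgebra.antipode (R := k) = LinearMap.id ∧
      HopfAlgebra.antipode (R := k) ∘ₗ SA' = LinearMap.id) :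
    Function.Bijective (omega2 actX coactY) := by
  have hS : ∀ h, HopfAlgebra.antipode k (SA' h) = h := LinearMap.congr_fun hSA.2
  have hS' : ∀ h : A, SA' (HopfAlgebra.antipode k h) = h := LinearMap.congr_fun hSA.1
  have hinj : Function.Injective (HopfAlgebra.antipode k : A →ₗ[k] A) :=
    Function.LeftInverse.injective hS'
  have h0 : omega2 actX coactY = omegaT actX coactY LinearMap.id := by
    simp [omegaT]
  have halg : ∀ c : k, HopfAlgebra.antipode k (algebraMap k A c) = algebraMap k A c := by
    intro c
    rw [Algebra.algebraMap_eq_smul_one, map_smul, HopfAlgebra.antipode_one]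
  rw [h0]
  refine Function.bijective_iff_has_inverse.mpr ⟨omegaT actX coactY SA', ?_, ?_⟩
  · intro z
    refine omegaT_comp hX hY _ _ (fun h => hinj ?_) z
    rw [halg, ← HopfAlgebra.mul_antipode_rTensor_comul_apply]
    obtain ⟨s, l, r, hh⟩ := exists_repr (k := k) h
    simp [hh, HopfAlgebra.antipode_mul_antidistrib, hS]
  · intro z
    refine omegaT_comp hX hY _ _ (fun h => hinj ?_) z
    rw [halg, ← HopfAlgebra.mul_antipode_lTensor_comul_apply]
    obtain ⟨s, l, r, hh⟩ := exists_repr (k := k) h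
    simp [hh, HopfAlgebra.antipode_mul_antidistrib, hS]

lemma tAct_tmul {h : A} {ι : Type*}
    {s : Finset ι} {l r : ι → A} (hh : Coalgebra.comul (R := k) h = ∑ i ∈ s, l i ⊗ₜ[k] r i)
    (x : X) (y : Y) : tAct actX actY (h ⊗ₜ[k] (x ⊗ₜ[k] y)) =
      ∑ i ∈ s, actX (l i ⊗ₜ[k] x) ⊗ₜ[k] actY (r i ⊗ₜ[k] y) := by
  simp [tAct, hh, TensorProduct.sum_tmul]

include hω hX hY haX haY in
theorem dual_linear
    {actXY' : B ⊗[k] (X ⊗[k] Y) →ₗ[k] X ⊗[k] Y}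
    (haXY : ∀ c z, actXY' (c ⊗ₜ[k] z) = ctr (ω.flip c) (tCoact coactX coactY z)) :
    omega2 actX coactY ∘ₗ tAct actX' actY' = actXY' ∘ₗ LinearMap.lTensor B (omega2 actX coactY) := by
  refine TensorProduct.ext' fun c z => ?_
  simp only [LinearMap.comp_apply, LinearMap.lTensor_tmul, haXY]
  induction z with
  | zero => simp
  | add s t hs ht => simp only [map_add, TensorProduct.tmul_add, hs, ht]
  | tmul x y =>
    obtain ⟨s, l, r, hc⟩ := exists_repr (k := k) c
    rw [tAct_tmul hc, map_sum]
    simp only [omega2_tmul]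
    have h3 := LinearMap.congr_fun hY.coassoc y
    simp only [LinearMap.comp_apply, LinearEquiv.coe_coe] at h3
    let Q : A ⊗[k] (A ⊗[k] Y) →ₗ[k] A ⊗[k] (X ⊗[k] Y) :=
      LinearMap.rTensor (X ⊗[k] Y) (LinearMap.mul' k A)
        ∘ₗ (TensorProduct.tensorTensorTensorComm k A X A Y).toLinearMap
        ∘ₗ LinearMap.rTensor (A ⊗[k] Y) (coactX ∘ₗ actX ∘ₗ (TensorProduct.mk k A X).flip x)
    have h1 : ∀ t : A ⊗[k] Y, tCoact coactX coactY (wmap actX LinearMap.id x t) =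
        Q (LinearMap.lTensor A coactY t) := by
      intro t
      induction t with
      | zero => simp
      | add s t hs ht => simp only [map_add, hs, ht]
      | tmul h y => simp [wmap_tmul, tCoact, Q]
    have hQ : ∀ (h h' : A) (y : Y), Q (h ⊗ₜ[k] (h' ⊗ₜ[k] y)) =
        TensorProduct.assoc k A X Y ((LinearMap.rTensor X (LinearMap.mulRight k h')
        (coactX (actX (h ⊗ₜ[k] x)))) ⊗ₜ[k] y) := by
      intro h h' y
      simp only [Q, LinearMap.comp_apply, LinearMap.rTensor_tmul, LinearMap.flip_apply,
        TensorProduct.mk_apply]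
      induction coactX (actX (h ⊗ₜ[k] x)) with
      | zero => simp
      | add s t hs ht => simp only [map_add, hs, ht, TensorProduct.add_tmul]
      | tmul u v => simp
    have hass : ∀ (f : A →ₗ[k] k) (u : A ⊗[k] X) (y : Y),
        ctr f (TensorProduct.assoc k A X Y (u ⊗ₜ[k] y)) = ctr f u ⊗ₜ[k] y := by
      intro f u y
      induction u with
      | zero => simp
      | add s t hs ht => simp only [map_add, hs, ht, TensorProduct.add_tmul]
      | tmul u v => simp [ctr_tmul, TensorProduct.smul_tmul']
    rw [h1, ← h3]
    have h5 : ∀ i, coactY (actY' (r i ⊗ₜ[k] y)) =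
        ctr (ω.flip (r i)) (TensorProduct.assoc k A A Y
          (LinearMap.rTensor Y (Coalgebra.comul (R := k)) (coactY y))) := by
      intro i
      rw [h3, ctr_lTensor, haY]
    simp only [h5]
    generalize coactY y = t
    induction t with
    | zero => simp
    | add s t hs ht => simp only [map_add, Finset.sum_add_distrib, hs, ht]
    | tmul h y =>
      obtain ⟨s', l', r', hh⟩ := exists_repr (k := k) h
      have e : Q (TensorProduct.assoc k A A Y
          (LinearMap.rTensor Y (Coalgebra.comul (R := k)) (h ⊗ₜ[k] y))) =
          TensorProduct.assoc k A X Y (ydR actX coactX (h ⊗ₜ[k] x) ⊗ₜ[k] y) := by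
        simp only [LinearMap.rTensor_tmul, hh, TensorProduct.sum_tmul, map_sum,
          TensorProduct.assoc_tmul, hQ, ydR_tmul _ _ hh]
      rw [e, hass, ← hX.yd, ctr_ydL hω haX h hc hh]
      simp only [LinearMap.rTensor_tmul, hh, TensorProduct.sum_tmul, map_sum,
          TensorProduct.assoc_tmul, ctr_tmul, map_smul, wmap_tmul, LinearMap.id_apply,
          LinearMap.flip_apply, TensorProduct.smul_tmul']
      rw [Finset.sum_comm]
      simp only [← TensorProduct.smul_tmul', map_smul]

include hω hcop hY hX hcX hcY in
theorem dual_colinear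
    {coactXY' : X ⊗[k] Y →ₗ[k] B ⊗[k] (X ⊗[k] Y)}
    (hcXY : ∀ h z, ctr (ω h) (coactXY' z) = tAct actX actY (h ⊗ₜ[k] z)) :
    coactXY' ∘ₗ omega2 actX coactY =
      LinearMap.lTensor B (omega2 actX coactY) ∘ₗ tCoact coactX' coactY' := by
  refine TensorProduct.ext' fun x y => ctr_ext hcop fun h => ?_
  obtain ⟨s, l, r, hh⟩ := exists_repr (k := k) h
  simp only [LinearMap.comp_apply, hcXY, ctr_lTensor, omega2_tmul]
  trans wmap actX LinearMap.id x (ydL actY coactY (h ⊗ₜ[k] y))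
  · rw [ydL_tmul _ _ hh]
    generalize coactY y = t
    induction t with
    | zero => simp
    | add s t hs ht =>
      simp only [map_add, Finset.sum_add_distrib, TensorProduct.tmul_add, hs, ht]
    | tmul u v => simp [wmap_tmul, tAct_tmul hh, hX.act_mul]
  · have e : ctr (ω h) (tCoact coactX' coactY' (x ⊗ₜ[k] y)) =
        ∑ i ∈ s, actX (r i ⊗ₜ[k] x) ⊗ₜ[k] actY (l i ⊗ₜ[k] y) := by
      simp only [← hcX, ← hcY, tCoact, LinearMap.comp_apply, TensorProduct.map_tmul]
      generalize coactX' x = t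
      generalize coactY' y = t'
      induction t with
      | zero => simp
      | add s t hs ht =>
        simp only [map_add, Finset.sum_add_distrib, TensorProduct.add_tmul, hs, ht]
      | tmul u v =>
        induction t' with
        | zero => simp
        | add s t hs ht =>
          simp only [map_add, Finset.sum_add_distrib, TensorProduct.tmul_add, hs, ht]
        | tmul u' v' =>
          simp [ctr_tmul, pair_mul_right hω hh, Finset.sum_smul, ← TensorProduct.smul_tmul',
            smul_smul]
    rw [hY.yd, e, ydR_tmul _ _ hh, map_sum, map_sum]
    refine Finset.sum_congr rfl fun i _ => ?_
    rw [omega2_tmul]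
    generalize coactY (actY (l i ⊗ₜ[k] y)) = t
    induction t with
    | zero => simp
    | add s t hs ht => simp only [map_add, hs, ht]
    | tmul u v => simp [wmap_tmul, hX.act_mul]

end Dual

section Antipode

variable {ω : A →ₗ[k] B →ₗ[k] k} (hω : IsHopfPairing ω)
    {n : ℕ} {b : Fin n → B} {a : Fin n → A} (hcop : IsInverseCopairing ω b a)

include hω hcop in
/-- The antipodes are adjoint with respect to a non-degenerate Hopf pairing. -/
theorem pair_antipode (h : A) (c : B) :
    ω h (HopfAlgebra.antipode k c) = ω (HopfAlgebra.antipode k h) c := by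
  let T : B →ₗ[k] B :=
    ∑ i, (ω (HopfAlgebra.antipode k (a i))).smulRight (b i)
  have hT : ∀ h c, ω h (T c) = ω (HopfAlgebra.antipode k h) c := by
    intro h c
    conv_rhs => rw [← hcop.1 h]
    simp [T, mul_comm]
  have hinv : WithConv.toConv T * WithConv.toConv LinearMap.id = 1 := by
    ext c
    refine ext_right hcop fun h => ?_
    obtain ⟨s, l, r, hc⟩ := exists_repr (k := k) c
    obtain ⟨s', l', r', hh⟩ := exists_repr (k := k) h
    have e := HopfAlgebra.mul_antipode_lTensor_comul_apply (R := k) h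
    simp only [hh, map_sum, LinearMap.lTensor_tmul, LinearMap.mul'_apply] at e
    have e2 := congrArg (fun z => ω z c) e
    simp only [map_sum, LinearMap.sum_apply, pair_mul_left hω hc] at e2
    simp only [LinearMap.convMul_apply, hc, map_sum, WithConv.ofConv_toConv,
      TensorProduct.map_tmul, LinearMap.mul'_apply, LinearMap.id_apply, pair_mul_right hω hh, hT]
    rw [Finset.sum_comm, e2]
    simp [Algebra.algebraMap_eq_smul_one, hω.one_left, hω.one_right, mul_comm]
  have hTS : T = HopfAlgebra.antipode k :=
    WithConv.toConv_injective (left_inv_eq_right_inv hinv LinearMap.id_mul_antipode)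
  rw [← hTS, hT]

end Antipode

lemma ctr_omegaAct {ω ω' : A →ₗ[k] B →ₗ[k] k} {SB' : B →ₗ[k] B}
    (h' : ∀ h c, ω' h c = ω h (SB' (SB' c))) (coact : M →ₗ[k] A ⊗[k] M)
    (c : B) (x : M) : omegaAct ω SB' coact (c ⊗ₜ[k] x) = ctr (ω'.flip c) (coact x) := by
  simp only [omegaAct, LinearMap.comp_apply, LinearMap.rTensor_tmul, LinearMap.lTensor_tmul]
  induction coact x with
  | zero => simp
  | add s t hs ht => simp only [map_add, TensorProduct.tmul_add, hs, ht]
  | tmul u v => simp [ctr_tmul, h']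

lemma ctr_omegaCoact {ω' : A →ₗ[k] B →ₗ[k] k} {n : ℕ} {b : Fin n → B} {a : Fin n → A}
    (hcop' : IsInverseCopairing ω' (fun i =>
      HopfAlgebra.antipode (R := k) (HopfAlgebra.antipode (R := k) (b i))) a)
    (act : A ⊗[k] M →ₗ[k] M) (h : A) (x : M) :
    ctr (ω' h) (omegaCoact b a act x) = act (h ⊗ₜ[k] x) := by
  conv_rhs => rw [← hcop'.1 h]
  simp only [omegaCoact, LinearMap.sum_apply, LinearMap.comp_apply, TensorProduct.mk_apply,
    map_sum, ctr_tmul, TensorProduct.sum_tmul, ← TensorProduct.smul_tmul', map_smul]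

end Helpers

/-- For a non-degenerate Hopf pairing `ω : A × B → k` with inverse
copairing `Σᵢ bᵢ ⊗ aᵢ` and bijective antipodes, and a left Yetter–Drinfel'd module
`(X, ρ, δ)` over `A`: (1) `Ω(X)`, with `b·x = ω(x₍₋₁₎, S_B⁻²(b)) x₍₀₎` and coaction
`x ↦ Σᵢ S_B²(bᵢ) ⊗ (aᵢ·x)`, is a left Yetter–Drinfel'd module over `B`; and
(2) `Ω₂(x ⊗ y) = (y₍₋₁₎·x) ⊗ y₍₀₎` is a `B`-linear, `B`-colinear bijection
`Ω(X) ⊗ Ω(Y) → Ω(X ⊗ Y)`. -/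
theorem omega_functor (ω : A →ₗ[k] B →ₗ[k] k) (hω : IsHopfPairing ω)
    {n : ℕ} (b : Fin n → B) (a : Fin n → A) (hcop : IsInverseCopairing ω b a)
    (SA' : A →ₗ[k] A) (SB' : B →ₗ[k] B)
    (hSA : SA' ∘ₗ HopfAlgebra.antipode (R := k) = LinearMap.id ∧
      HopfAlgebra.antipode (R := k) ∘ₗ SA' = LinearMap.id)
    (hSB : SB' ∘ₗ HopfAlgebra.antipode (R := k) = LinearMap.id ∧
      HopfAlgebra.antipode (R := k) ∘ₗ SB' = LinearMap.id)
    (actX : A ⊗[k] X →ₗ[k] X) (coactX : X →ₗ[k] A ⊗[k] X)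
    (actY : A ⊗[k] Y →ₗ[k] Y) (coactY : Y →ₗ[k] A ⊗[k] Y)
    (hX : IsYD actX coactX) (hY : IsYD actY coactY) :
    -- (1) `Ω(X)` is a left Yetter–Drinfel'd module over `B`
    IsYD (omegaAct ω SB' coactX) (omegaCoact b a actX)
    -- (2) `Ω₂` is a bijection ...
    ∧ Function.Bijective (omega2 actX coactY)
    -- ... which is `B`-linear ...
    ∧ (omega2 actX coactY ∘ₗ tAct (omegaAct ω SB' coactX) (omegaAct ω SB' coactY)
        = omegaAct ω SB' (tCoact coactX coactY)
            ∘ₗ LinearMap.lTensor B (omega2 actX coactY))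
    -- ... and `B`-colinear
    ∧ (omegaCoact b a (tAct actX actY) ∘ₗ omega2 actX coactY
        = LinearMap.lTensor B (omega2 actX coactY)
            ∘ₗ tCoact (omegaCoact b a actX) (omegaCoact b a actY)) := by
  have hS : ∀ h, HopfAlgebra.antipode k (SA' h) = h := LinearMap.congr_fun hSA.2
  have hS' : ∀ h : A, SA' (HopfAlgebra.antipode k h) = h := LinearMap.congr_fun hSA.1
  have hT : ∀ h, HopfAlgebra.antipode k (SB' h) = h := LinearMap.congr_fun hSB.2
  have hT' : ∀ h : B, SB' (HopfAlgebra.antipode k h) = h := LinearMap.congr_fun hSB.1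
  have hadj : ∀ h c, ω h (SB' c) = ω (SA' h) c := by
    intro h c
    conv_lhs => rw [← hS h]
    rw [← pair_antipode hω hcop, hT]
  have hSAm : ∀ h h', SA' (h * h') = SA' h' * SA' h := by
    intro h h'
    conv_lhs => rw [← hS h, ← hS h', ← HopfAlgebra.antipode_mul_antidistrib, hS']
  have hSBm : ∀ h h', SB' (h * h') = SB' h' * SB' h := by
    intro h h'
    conv_lhs => rw [← hT h, ← hT h', ← HopfAlgebra.antipode_mul_antidistrib, hT']
  have hSA1 : SA' 1 = 1 := by
    conv_lhs => rw [← HopfAlgebra.antipode_one (R := k) (A := A), hS']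
  have hSB1 : SB' 1 = 1 := by
    conv_lhs => rw [← HopfAlgebra.antipode_one (R := k) (A := B), hT']
  -- the twisted pairing `ω'(h, c) = ω(h, S⁻² c)`
  let ω' : A →ₗ[k] B →ₗ[k] k := ω.compl₂ (SB' ∘ₗ SB')
  have hω'1 : ∀ h c, ω' h c = ω h (SB' (SB' c)) := fun h c => rfl
  have hω'2 : ∀ h, ω' h = ω (SA' (SA' h)) := by
    intro h
    ext c
    rw [hω'1, hadj, hadj]
  have hω'3 : ∀ c, ω'.flip c = ω.flip (SB' (SB' c)) := fun c => rfl
  have hω' : IsHopfPairing ω' := by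
    constructor
    · intro h h' c
      rw [hω'2, hω'2, hω'2, hSAm, hSAm, hω.mul_left]
    · intro c
      rw [hω'2, hSA1, hSA1, hω.one_left]
    · intro h c c'
      rw [hω'1, hω'3, hω'3, hSBm, hSBm, hω.mul_right]
    · intro h
      rw [hω'1, hSB1, hSB1, hω.one_right]
  let b' : Fin n → B := fun i =>
    HopfAlgebra.antipode (R := k) (HopfAlgebra.antipode (R := k) (b i))
  have hcop' : IsInverseCopairing ω' b' a := by
    constructor
    · intro x
      simp only [hω'1, b', hT', hcop.1]
    · intro y
      simp only [hω'1, b', ← map_smul, ← map_sum, hcop.2, hT]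
  exact ⟨dual_isYD hω' hcop' hX (ctr_omegaAct hω'1 _) (ctr_omegaCoact hcop' _), omega2_bijective hX hY SA' hSA,
    dual_linear hω' hX hY (ctr_omegaAct hω'1 _) (ctr_omegaAct hω'1 _) (ctr_omegaAct hω'1 _),
    dual_colinear hω' hcop' hX hY (ctr_omegaCoact hcop' _) (ctr_omegaCoact hcop' _) (ctr_omegaCoact hcop' _)⟩

end Pairing

end
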